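/- For every natural number n ≥ 0, the 2n-th moment of the rescaled logistic density equals |(2 − 2^{2n})·B_{2n}|: ∫_ℝ x^{2n} · (π/(4 cosh²(πx/2))) dx = |(2 − 2^{2n})·B_{2n}|, where B_k denotes the k-th Bernoulli number; moreover all odd moments vanish. -/

import Mathlib

open MeasureTheory

/-!
On `x > 0` the logistic density is the derivative `∑ₖ (-1)^(k+1) π k e^(-πkx)` of the geometric
series for `(1 + e^(-πx))⁻¹`, so its Mellin transform is a Gamma factor times the alternating zeta
function. Euler's evaluation of `ζ(2n)` then gives the `2n`-th moment for `n ≠ 0`, while the total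
mass is read off from the antiderivative. The sign `(-1)^n` of the closed form disappears on taking
absolute values, because an even moment of a density is nonnegative.
-/

section

open Set Filter Topology
open scoped Real

theorem integral_eq_zero_of_odd {G E : Type*} [MeasurableSpace G] [AddGroup G] [MeasurableNeg G]
    {μ : Measure G} [μ.IsNegInvariant] [NormedAddCommGroup E] [NormedSpace ℝ E] {f : G → E}
    (hf : Function.Odd f) : ∫ x, f x ∂μ = 0 := by
  have : IsAddTorsionFree E := .of_isTorsionFree ℝ E
  rw [← self_eq_neg, ← integral_neg, ← integral_neg_eq_self f μ]
  simp only [hf.eq]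

theorem integral_eq_two_mul_integral_Ioi_of_even {f : ℝ → ℝ} (hf : Function.Even f) :
    ∫ x, f x = 2 * ∫ x in Ioi 0, f x := by
  have hf_abs (x : ℝ) : f |x| = f x := by
    rcases abs_choice x with h | h <;> simp only [h, hf.eq]
  simpa only [hf_abs] using integral_comp_abs (f := f)

theorem mellin_ofReal_natCast_add_one (f : ℝ → ℝ) (m : ℕ) :
    mellin (fun x ↦ (f x : ℂ)) (m + 1) = ((∫ x in Ioi 0, x ^ m * f x : ℝ) : ℂ) := by
  simp only [mellin, add_sub_cancel_right, Complex.cpow_natCast, smul_eq_mul,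
    ← integral_complex_ofReal, Complex.ofReal_mul, Complex.ofReal_pow]

theorem div_cpow_self (z : ℂ) {s : ℂ} (hs : s ≠ 1) : z / z ^ s = 1 / z ^ (s - 1) := by
  rcases eq_or_ne z 0 with rfl | hz
  · rw [zero_div, Complex.zero_cpow (sub_ne_zero.mpr hs), div_zero]
  · rw [Complex.cpow_sub _ _ hz, Complex.cpow_one, one_div_div]

theorem div_rpow_self {x : ℝ} (hx : 0 ≤ x) {s : ℝ} (hs : s ≠ 1) :
    x / x ^ s = 1 / x ^ (s - 1) := by
  rcases hx.eq_or_lt with rfl | hx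
  · rw [zero_div, Real.zero_rpow (sub_ne_zero.mpr hs), div_zero]
  · rw [Real.rpow_sub_one hx.ne', one_div_div]

theorem hasSum_neg_one_pow_mul {R : Type*} [Ring R] [TopologicalSpace R] [IsTopologicalRing R]
    {f : ℕ → R} {a b : R} (hf : HasSum f a) (hf_even : HasSum (fun k ↦ f (2 * k)) b) :
    HasSum (fun k ↦ (-1) ^ k * f k) (2 * b - a) := by
  have hf_ite : HasSum (fun k ↦ if Even k then f k else 0) b := by
    have h_inj : Function.Injective fun k : ℕ ↦ 2 * k := mul_right_injective₀ two_ne_zero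
    refine (h_inj.hasSum_iff fun k hk ↦ if_neg fun h ↦ hk ?_).mp ?_
    · exact (even_iff_exists_two_mul.mp h).imp fun _ ↦ Eq.symm
    · simpa only [Function.comp_def, even_two_mul, if_true] using hf_even
  convert! (hf_ite.mul_left 2).sub hf using 1
  funext k
  rcases Nat.even_or_odd k with hk | hk
  · rw [if_pos hk, hk.neg_one_pow, one_mul, two_mul, add_sub_cancel_right]
  · rw [if_neg (Nat.not_even_iff_odd.mpr hk), hk.neg_one_pow, neg_one_mul, mul_zero, zero_sub]

theorem hasSum_alternating_zeta {s : ℂ} (hs : 1 < s.re) :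
    HasSum (fun k : ℕ ↦ (-1) ^ (k + 1) / (k : ℂ) ^ s) ((1 - 2 ^ (1 - s)) * riemannZeta s) := by
  have h_zeta : HasSum (fun k : ℕ ↦ 1 / (k : ℂ) ^ s) (riemannZeta s) := by
    rw [zeta_eq_tsum_one_div_nat_cpow hs]
    exact (Complex.summable_one_div_nat_cpow.mpr hs).hasSum
  have h_even : HasSum (fun k : ℕ ↦ 1 / ((2 * k : ℕ) : ℂ) ^ s) (2 ^ (-s) * riemannZeta s) := by
    refine (h_zeta.mul_left (2 ^ (-s))).congr_fun fun k ↦ ?_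
    rw [Nat.cast_mul, Complex.natCast_mul_natCast_cpow, Complex.cpow_neg, Nat.cast_ofNat]
    ring
  convert! (hasSum_neg_one_pow_mul h_zeta h_even).neg using 1
  · funext k
    ring
  · rw [sub_eq_add_neg 1 s, Complex.cpow_add _ _ two_ne_zero, Complex.cpow_one]
    ring

/-- The density of the rescaled logistic distribution, the logistic law with location `0` and scale
`1/π`; its power moments are the integrals evaluated here. -/
noncomputable def logisticDensity (x : ℝ) : ℝ :=
  π / (4 * Real.cosh (π * x / 2) ^ 2)

theorem logisticDensity_nonneg (x : ℝ) : 0 ≤ logisticDensity x := by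
  unfold logisticDensity
  positivity

theorem logisticDensity_even : Function.Even logisticDensity := fun x ↦ by
  simp only [logisticDensity, mul_neg, neg_div, Real.cosh_neg]

theorem logisticDensity_eq_exp (x : ℝ) :
    logisticDensity x = π * (Real.exp (-(π * x)) / (1 + Real.exp (-(π * x))) ^ 2) := by
  have h_exp : Real.exp (-(π * x)) = Real.exp (-(π * x / 2)) ^ 2 := by
    rw [← Real.exp_nat_mul]
    ring_nf
  have h_cosh : Real.cosh (π * x / 2) =
      (1 + Real.exp (-(π * x / 2)) ^ 2) / (2 * Real.exp (-(π * x / 2))) := by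
    rw [Real.cosh_eq, Real.exp_neg]
    field_simp
  rw [logisticDensity, h_cosh, h_exp]
  field_simp
  ring

theorem hasDerivAt_sigmoid_pi_mul (x : ℝ) :
    HasDerivAt (fun y ↦ Real.sigmoid (π * y)) (logisticDensity x) x := by
  convert! (Real.hasDerivAt_sigmoid (π * x)).comp x ((hasDerivAt_id x).const_mul π) using 1
  rw [logisticDensity_eq_exp, Real.sigmoid_def]
  field_simp
  ring

theorem integral_Ioi_logisticDensity : ∫ x in Ioi 0, logisticDensity x = 1 / 2 := by
  have h_lim : Tendsto (fun x ↦ Real.sigmoid (π * x)) atTop (𝓝 1) :=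
    Real.tendsto_sigmoid_atTop.comp (tendsto_id.const_mul_atTop Real.pi_pos)
  rw [integral_Ioi_of_hasDerivAt_of_nonneg' (fun x _ ↦ hasDerivAt_sigmoid_pi_mul x)
    (fun x _ ↦ logisticDensity_nonneg x) h_lim, mul_zero, Real.sigmoid_zero]
  norm_num

theorem hasSum_logisticDensity {x : ℝ} (hx : 0 < x) :
    HasSum (fun k : ℕ ↦ (-1) ^ (k + 1) * (π * k) * Real.exp (-π * k * x)) (logisticDensity x) := by
  have h_norm : ‖-Real.exp (-(π * x))‖ < 1 := by
    rw [norm_neg, Real.norm_eq_abs, Real.abs_exp, Real.exp_lt_one_iff, neg_lt_zero]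
    positivity
  convert! (hasSum_coe_mul_geometric_of_norm_lt_one h_norm).mul_left (-π) using 1
  · funext k
    rw [neg_pow (Real.exp _), ← Real.exp_nat_mul]
    ring_nf
  · rw [logisticDensity_eq_exp]
    ring

theorem summable_norm_logisticDensity_coeff_div_rpow {σ : ℝ} (hσ : 2 < σ) :
    Summable fun k : ℕ ↦ ‖(-1) ^ (k + 1) * (π * k : ℂ)‖ / (k : ℝ) ^ σ := by
  have h_summable : Summable fun k : ℕ ↦ 1 / (k : ℝ) ^ (σ - 1) :=
    Real.summable_one_div_nat_rpow.mpr (by linarith)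
  refine (h_summable.mul_left π).congr fun k ↦ ?_
  rw [← div_rpow_self k.cast_nonneg (by linarith), norm_mul, norm_mul, norm_pow, norm_neg,
    norm_one, one_pow, one_mul, Complex.norm_natCast, Complex.norm_of_nonneg Real.pi_pos.le,
    mul_div_assoc]

theorem mellin_logisticDensity {s : ℂ} (hs : 2 < s.re) :
    mellin (fun x ↦ (logisticDensity x : ℂ)) s =
      Complex.Gamma s * π ^ (1 - s) * ((1 - 2 ^ (2 - s)) * riemannZeta (s - 1)) := by
  have h_series : ∀ x ∈ Ioi (0 : ℝ), HasSum
      (fun k : ℕ ↦ (-1) ^ (k + 1) * (π * k : ℂ) * Real.exp (-π * k * x))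
      (logisticDensity x : ℂ) := fun x hx ↦ by
    exact_mod_cast Complex.hasSum_ofReal.mpr (hasSum_logisticDensity hx)
  have h_coeff (k : ℕ) : (-1) ^ (k + 1) * (π * k : ℂ) = 0 ∨ (0 : ℝ) < k := by
    rcases k.eq_zero_or_pos with rfl | hk
    · exact Or.inl (by rw [Nat.cast_zero, mul_zero, mul_zero])
    · exact Or.inr (Nat.cast_pos.mpr hk)
  have h_mellin := hasSum_mellin_pi_mul h_coeff (by linarith) h_series
    (summable_norm_logisticDensity_coeff_div_rpow hs)
  have h_re : 1 < (s - 1).re := by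
    rw [Complex.sub_re, Complex.one_re]
    linarith
  have h_zeta := (hasSum_alternating_zeta h_re).mul_left (Complex.Gamma s * π ^ (1 - s))
  rw [show 1 - (s - 1) = 2 - s by ring] at h_zeta
  have hs_ne : s ≠ 1 := by
    rintro rfl
    norm_num at hs
  have hπ : (π : ℂ) ≠ 0 := Complex.ofReal_ne_zero.mpr Real.pi_ne_zero
  refine h_mellin.unique (h_zeta.congr_fun fun k ↦ ?_)
  calc π ^ (-s) * Complex.Gamma s * ((-1) ^ (k + 1) * (π * k : ℂ)) / ((k : ℝ) : ℂ) ^ s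
    _ = Complex.Gamma s * (π * π ^ (-s)) * (-1) ^ (k + 1) * (k / (k : ℂ) ^ s) := by
      rw [Complex.ofReal_natCast]
      ring
    _ = Complex.Gamma s * π ^ (1 - s) * ((-1) ^ (k + 1) / (k : ℂ) ^ (s - 1)) := by
      rw [div_cpow_self _ hs_ne, sub_eq_add_neg 1 s, Complex.cpow_add _ _ hπ,
        Complex.cpow_one]
      ring

theorem integral_Ioi_pow_mul_logisticDensity {m : ℕ} (hm : 2 ≤ m) :
    ((∫ x in Ioi 0, x ^ m * logisticDensity x : ℝ) : ℂ) =
      m.factorial / π ^ m * ((1 - 2 / 2 ^ m) * riemannZeta m) := by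
  have h_re : 2 < (m + 1 : ℂ).re := by
    rw [Complex.add_re, Complex.natCast_re, Complex.one_re]
    exact_mod_cast Nat.lt_succ_of_le hm
  have h_pi_exp : (1 - (m + 1) : ℂ) = -m := by ring
  have h_two_exp : (2 - (m + 1) : ℂ) = 1 - m := by ring
  rw [← mellin_ofReal_natCast_add_one, mellin_logisticDensity h_re, Complex.Gamma_nat_eq_factorial,
    h_pi_exp, h_two_exp, add_sub_cancel_right, Complex.cpow_neg, Complex.cpow_natCast,
    Complex.cpow_sub _ _ two_ne_zero, Complex.cpow_one, Complex.cpow_natCast,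
    div_eq_mul_inv (_ : ℂ) (π ^ m)]

theorem integral_pow_two_mul_logisticDensity (n : ℕ) :
    ∫ x, x ^ (2 * n) * logisticDensity x =
      (-1) ^ n * ((2 - 2 ^ (2 * n)) * (bernoulli (2 * n) : ℝ)) := by
  have h_even : Function.Even fun x ↦ x ^ (2 * n) * logisticDensity x :=
    Function.Even.mul_even (even_two_mul n).neg_pow logisticDensity_even
  rw [integral_eq_two_mul_integral_Ioi_of_even h_even]
  rcases eq_or_ne n 0 with rfl | hn
  · norm_num [integral_Ioi_logisticDensity]
  · rw [← Complex.ofReal_inj, Complex.ofReal_mul,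
      integral_Ioi_pow_mul_logisticDensity (by omega : 2 ≤ 2 * n), Nat.cast_mul, Nat.cast_two,
      riemannZeta_two_mul_nat hn]
    have h_two_pow : (2 : ℂ) ^ (2 * n) = 2 * 2 ^ (2 * n - 1) := by
      rw [← pow_succ', Nat.sub_add_cancel (by omega)]
    have hπ : (π : ℂ) ≠ 0 := Complex.ofReal_ne_zero.mpr Real.pi_ne_zero
    have h_factorial : ((2 * n).factorial : ℂ) ≠ 0 :=
      Nat.cast_ne_zero.mpr (2 * n).factorial_ne_zero
    push_cast
    rw [h_two_pow]
    field_simp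
    ring

end

/-- The `2n`-th moment of the rescaled logistic density `π/(4 cosh²(πx/2))` equals
`|(2 − 2^{2n})·B_{2n}|` where `B_k` is the `k`-th Bernoulli number; all odd moments
vanish. -/
theorem logistic_moments (n : ℕ) :
    (∫ x : ℝ, x ^ (2 * n) * (Real.pi / (4 * Real.cosh (Real.pi * x / 2) ^ 2)))
      = |((2 : ℝ) - 2 ^ (2 * n)) * ((bernoulli (2 * n) : ℚ) : ℝ)| ∧
    ∀ m : ℕ,
      (∫ x : ℝ, x ^ (2 * m + 1) * (Real.pi / (4 * Real.cosh (Real.pi * x / 2) ^ 2)))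
        = 0 := by
  change ∫ x : ℝ, x ^ (2 * n) * logisticDensity x = _ ∧
    ∀ m : ℕ, ∫ x : ℝ, x ^ (2 * m + 1) * logisticDensity x = 0
  constructor
  · have h_nonneg : 0 ≤ ∫ x : ℝ, x ^ (2 * n) * logisticDensity x :=
      integral_nonneg fun x ↦ mul_nonneg ((even_two_mul n).pow_nonneg x) (logisticDensity_nonneg x)
    rw [← abs_of_nonneg h_nonneg, integral_pow_two_mul_logisticDensity, abs_mul, abs_neg_one_pow,
      one_mul]
  · intro m
    have h_odd : Function.Odd fun x ↦ x ^ (2 * m + 1) * logisticDensity x :=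
      Function.Odd.mul_even (odd_two_mul_add_one m).neg_pow logisticDensity_even
    exact integral_eq_zero_of_odd h_odd
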